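/- For every integer m ≥ 1 there exists an indexed family of closed axis-parallel rectangles in ℝ², each with horizontal side of length exactly 1 (i.e., each of the form [a, a+1] × [b, c] with b < c), that forms an m-fold covering of the plane ℝ² and that cannot be decomposed into two coverings. -/

import Mathlib

/-!
The proof realises a classical non-2-colourable tree hypergraph by rectangles. Put `n = 2m`. The
nodes of an infinite forest of binary trees of depth `n` are pairs `(i, q)` with `i < n`, where
`(i, q)` is the parent of `(i - 1, 2q)` and `(i - 1, 2q + 1)`; the leaves are the natural numbers
`j`, and the ancestor of `j` at level `i` is `(i, j / 2^(i+1))`. The path to `j` turns right at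
that ancestor when bit `i` of `j` is `1`, and left otherwise.

Node `(i, q)` becomes the rectangle whose vertical side is the dyadic interval
`[q 2^(i+2), (q+1) 2^(i+2)]` and whose left side lies at the midpoint of that interval, divided
by `2^(n+1)`. At the height `y = 2j + 1` of leaf `j` exactly the ancestors of `j` are present.
Among them, `x = y / 2^(n+1)` selects those with midpoint below `y`, i.e. those where the path
turns right, and `x = y / 2^(n+1) + 1` selects those where it turns left (`key`). For each leaf
one of the two points, called critical, is chosen so that it lies in at least `m` rectangles.

Given a partition into two classes, descend from a root, turning right at nodes of the first class
and left at the others (`exists_leaf`). The critical point of the leaf reached lies in rectangles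
of one class only. All critical points have distinct odd heights, so every other point of the
plane lies in a rectangle of unit width that avoids all critical points (`exists_avoid`); adding
`m` copies of such rectangles yields an `m`-fold covering without spoiling the argument.
-/

noncomputable section

/-- The family `C` covers every point of `A ⊆ ℝ²` at least `m` times. -/
def MFoldCover {I : Type*} (m : ℕ) (C : I → Set (ℝ × ℝ)) (A : Set (ℝ × ℝ)) : Prop :=
  ∀ x ∈ A, ∃ t : Finset I, m ≤ t.card ∧ ∀ i ∈ t, x ∈ C i

/-- The family `C` can be decomposed into two coverings of the plane. -/
def DecomposableIntoTwoCoverings {I : Type*} (C : I → Set (ℝ × ℝ)) : Prop :=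
  ∃ I₁ : Set I, (∀ x : ℝ × ℝ, ∃ i ∈ I₁, x ∈ C i) ∧ (∀ x : ℝ × ℝ, ∃ i ∈ I₁ᶜ, x ∈ C i)

namespace Statement3

/-- Bit `i` of the leaf `j` is one: the path to `j` turns right at level `i`. -/
def bit (j i : ℕ) : Prop := j / 2 ^ i % 2 = 1

open Classical in
/-- The path to `j` makes at least `m` right turns among its `2m` turns. -/
def side (m j : ℕ) : Prop := m ≤ ((Finset.univ : Finset (Fin (2 * m))).filter
  (fun i : Fin (2 * m) => bit j i)).card

open Classical in
/-- Abscissa of the critical point of the leaf `j`. -/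
def px (m j : ℕ) : ℝ :=
  if side m j then (2 * j + 1 : ℝ) / 2 ^ (2 * m + 1) else (2 * j + 1 : ℝ) / 2 ^ (2 * m + 1) + 1

/-- The critical point of the leaf `j`. -/
def crit (m j : ℕ) : ℝ × ℝ := (px m j, 2 * j + 1)

/-- The rectangle `[a, a+1] × [b, c]`. -/
def rect (a b c : ℝ) : Set (ℝ × ℝ) := Set.Icc a (a + 1) ×ˢ Set.Icc b c

/-- Left side of the rectangle of node `(i, q)`. -/
def na (m i q : ℕ) : ℝ := ((2 * q + 1) * 2 ^ (i + 1) : ℝ) / 2 ^ (2 * m + 1)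

/-- Lower side of the rectangle of node `(i, q)`. -/
def nb (i q : ℕ) : ℝ := (q : ℝ) * 2 ^ (i + 2)

/-- Upper side of the rectangle of node `(i, q)`. -/
def nc (i q : ℕ) : ℝ := ((q : ℝ) + 1) * 2 ^ (i + 2)

/-- Only the ancestors of the leaf `j` meet the height `2j + 1`. Since `2j + 1` is odd and the
endpoints are even, closedness of the intervals plays no role. -/
lemma height_iff (i q j : ℕ) :
    (nb i q ≤ 2 * j + 1 ∧ (2 * j + 1 : ℝ) ≤ nc i q) ↔ q = j / 2 ^ (i + 1) := by
  have h1 : nb i q ≤ 2 * j + 1 ↔ q * 2 ^ (i + 2) ≤ 2 * j + 1 := by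
    unfold nb; exact_mod_cast Iff.rfl
  have h2 : (2 * j + 1 : ℝ) ≤ nc i q ↔ 2 * j + 1 ≤ (q + 1) * 2 ^ (i + 2) := by
    unfold nc; exact_mod_cast Iff.rfl
  rw [h1, h2, eq_comm, Nat.div_eq_iff (by positivity)]
  have h3 : 2 ^ (i + 2) = 2 * 2 ^ (i + 1) := by ring
  have hp : 0 < 2 ^ (i + 1) := by positivity
  rw [h3]
  generalize 2 ^ (i + 1) = r at *
  have e1 : q * (2 * r) = 2 * (q * r) := by ring
  have e2 : (q + 1) * (2 * r) = 2 * (q * r) + 2 * r := by ring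
  rw [e1, e2]
  generalize q * r = s at *
  omega

/-- At an ancestor of `j` the midpoint lies below the height of `j` exactly at right turns. -/
lemma mid_iff (i q j : ℕ) (hq : q = j / 2 ^ (i + 1)) :
    ((2 * q + 1) * 2 ^ (i + 1) : ℝ) ≤ 2 * j + 1 ↔ bit j i := by
  have h1 : ((2 * q + 1) * 2 ^ (i + 1) : ℝ) ≤ 2 * j + 1 ↔
      (2 * q + 1) * 2 ^ (i + 1) ≤ 2 * j + 1 := by exact_mod_cast Iff.rfl
  have h2 : (2 * q + 1) * 2 ^ (i + 1) ≤ 2 * j + 1 ↔ (2 * q + 1) * 2 ^ i ≤ j := by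
    rw [pow_succ, ← mul_assoc]; omega
  rw [h1, h2, ← Nat.le_div_iff_mul_le (by positivity)]
  rw [pow_succ, ← Nat.div_div_eq_div_mul] at hq
  unfold bit
  omega

/-- The critical point of `j` lies in the rectangles of precisely those ancestors of `j` where the
path to `j` turns to the chosen side. -/
lemma key (m i q j : ℕ) (hi : i < 2 * m) :
    crit m j ∈ rect (na m i q) (nb i q) (nc i q) ↔
      q = j / 2 ^ (i + 1) ∧ (bit j i ↔ side m j) := by
  have hmem : crit m j ∈ rect (na m i q) (nb i q) (nc i q) ↔
      (na m i q ≤ px m j ∧ px m j ≤ na m i q + 1) ∧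
        (nb i q ≤ 2 * j + 1 ∧ (2 * j + 1 : ℝ) ≤ nc i q) := by
    simp only [crit, rect, Set.mem_prod, Set.mem_Icc]
  rw [hmem, height_iff, and_comm]
  refine and_congr_right fun hq => ?_
  obtain ⟨hb, hc⟩ := (height_iff i q j).2 hq
  have hmid := mid_iff i q j hq
  have hN : (0 : ℝ) < 2 ^ (2 * m + 1) := by positivity
  -- The midpoint is even, so it differs from the height.
  have hne : ((2 * q + 1) * 2 ^ (i + 1) : ℝ) ≠ 2 * j + 1 := by
    intro h
    have h' : (2 * q + 1) * 2 ^ (i + 1) = 2 * j + 1 := by exact_mod_cast h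
    rw [pow_succ, ← mul_assoc] at h'
    omega
  -- Half the length of the vertical side is at most `2 ^ (2m)`, so that after rescaling the
  -- midpoint and the height differ by at most `1`.
  have hle : (2 : ℝ) ^ (i + 1) ≤ 2 ^ (2 * m + 1) :=
    pow_le_pow_right₀ (by norm_num) (by omega)
  unfold nb at hb
  unfold nc at hc
  have e : (2 : ℝ) ^ (i + 2) = 2 * 2 ^ (i + 1) := by ring
  rw [e] at hb hc
  have hA : na m i q ≤ (2 * j + 1 : ℝ) / 2 ^ (2 * m + 1) ↔ bit j i := by
    unfold na; rw [div_le_div_iff_of_pos_right hN, hmid]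
  have hB : (2 * j + 1 : ℝ) / 2 ^ (2 * m + 1) ≤ na m i q ↔ ¬ bit j i := by
    unfold na
    rw [div_le_div_iff_of_pos_right hN, ← hmid, not_le]
    exact ⟨fun h => lt_of_le_of_ne h (Ne.symm hne), le_of_lt⟩
  have hC : na m i q ≤ (2 * j + 1 : ℝ) / 2 ^ (2 * m + 1) + 1 := by
    unfold na
    rw [div_add_one hN.ne', div_le_div_iff_of_pos_right hN]
    nlinarith
  have hD : (2 * j + 1 : ℝ) / 2 ^ (2 * m + 1) ≤ na m i q + 1 := by
    unfold na
    rw [div_add_one hN.ne', div_le_div_iff_of_pos_right hN]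
    nlinarith
  unfold px
  split_ifs with hs
  · simp only [hA, hD, hs, and_true, iff_true]
  · simp only [hC, hs, true_and, iff_false, add_le_add_iff_right, hB]

/-- Descending `n` levels from a node `q` and turning right exactly at the nodes satisfying `c`
leads to a leaf. -/
lemma exists_leaf (c : ℕ → ℕ → Prop) (n : ℕ) : ∀ q : ℕ, ∃ j : ℕ, j / 2 ^ n = q ∧
    ∀ i < n, (bit j i ↔ c i (j / 2 ^ (i + 1))) := by
  classical
  induction n with
  | zero => intro q; exact ⟨q, by simp, by simp⟩
  | succ n ih =>
    intro q
    obtain ⟨j, hj, h⟩ := ih (2 * q + if c n q then 1 else 0)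
    have hq : j / 2 ^ (n + 1) = q := by
      rw [pow_succ, ← Nat.div_div_eq_div_mul, hj]
      split_ifs <;> omega
    refine ⟨j, hq, fun i hi => ?_⟩
    rcases Nat.lt_succ_iff_lt_or_eq.1 hi with hi | rfl
    · exact h i hi
    · rw [hq]
      unfold bit
      rw [hj]
      split_ifs with hc <;> simp [hc]

/-- Every non-critical point lies in a rectangle of unit width without critical points: choose it
so thin that its height range contains no integer other than possibly the height of the point, and
so that the point is on its left or right side. -/
lemma exists_avoid (m : ℕ) (p : ℝ × ℝ) (hp : ∀ j, p ≠ crit m j) :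
    ∃ a b c : ℝ, b < c ∧ p ∈ rect a b c ∧ ∀ j, crit m j ∉ rect a b c := by
  obtain ⟨x, z⟩ := p
  have h1 : (⌈z⌉ : ℝ) < z + 1 := Int.ceil_lt_add_one z
  have h2 : z < ⌊z⌋ + 1 := Int.lt_floor_add_one z
  have hthin : ∀ j : ℕ, (⌈z⌉ - 1 + z) / 2 ≤ (2 * j + 1 : ℝ) →
      (2 * j + 1 : ℝ) ≤ (z + ⌊z⌋ + 1) / 2 → (2 * j + 1 : ℝ) = z := by
    intro j hb hc
    have h3 : z ≤ ⌈z⌉ := Int.le_ceil z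
    have h4 : (⌊z⌋ : ℝ) ≤ z := Int.floor_le z
    have h5 : ((⌈z⌉ - 1 : ℤ) : ℝ) < ((2 * j + 1 : ℤ) : ℝ) := by push_cast; linarith
    have h6 : ((2 * j + 1 : ℤ) : ℝ) < ((⌊z⌋ + 1 : ℤ) : ℝ) := by push_cast; linarith
    rw [Int.cast_lt] at h5 h6
    have h7 : (⌈z⌉ : ℝ) ≤ ((2 * j + 1 : ℤ) : ℝ) := Int.cast_le.2 (by omega)
    have h8 : ((2 * j + 1 : ℤ) : ℝ) ≤ (⌊z⌋ : ℝ) := Int.cast_le.2 (by omega)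
    push_cast at h7 h8
    linarith
  have hx : ∃ a : ℝ, a ≤ x ∧ x ≤ a + 1 ∧
      ∀ j : ℕ, (2 * j + 1 : ℝ) = z → ¬ (a ≤ px m j ∧ px m j ≤ a + 1) := by
    by_cases hz : ∃ j : ℕ, (2 * j + 1 : ℝ) = z
    · obtain ⟨j, hj⟩ := hz
      have hne : x ≠ px m j := by
        rintro rfl
        exact hp j (by simp [crit, hj])
      have huniq : ∀ j' : ℕ, (2 * j' + 1 : ℝ) = z → j' = j := by
        intro j' hj'
        have : (j' : ℝ) = j := by linarith
        exact_mod_cast this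
      rcases lt_or_gt_of_ne hne with h | h
      · refine ⟨x - 1, by linarith, by linarith, fun j' hj' => ?_⟩
        rw [huniq j' hj']
        rintro ⟨_, h'⟩
        linarith
      · refine ⟨x, le_rfl, by linarith, fun j' hj' => ?_⟩
        rw [huniq j' hj']
        rintro ⟨h', _⟩
        linarith
    · exact ⟨x, le_rfl, by linarith, fun j hj => (hz ⟨j, hj⟩).elim⟩
  obtain ⟨a, ha, ha', hav⟩ := hx
  refine ⟨a, (⌈z⌉ - 1 + z) / 2, (z + ⌊z⌋ + 1) / 2, by linarith, ?_, fun j hj => ?_⟩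
  · exact ⟨⟨ha, ha'⟩, ⟨by dsimp only; linarith, by dsimp only; linarith⟩⟩
  · obtain ⟨hj1, hj2, hj3⟩ := hj
    exact hav j (hthin j hj2 hj3) hj1

/-- Each critical point lies in at least `m` rectangles of nodes. -/
lemma crit_cover (m j : ℕ) : ∃ t : Finset (Fin (2 * m) × ℕ), m ≤ t.card ∧
    ∀ v ∈ t, crit m j ∈ rect (na m v.1 v.2) (nb v.1 v.2) (nc v.1 v.2) := by
  classical
  have hinj : Function.Injective (fun i : Fin (2 * m) => (i, j / 2 ^ ((i : ℕ) + 1))) :=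
    fun i i' h => (Prod.mk.inj h).1
  refine ⟨(Finset.univ.filter (fun i : Fin (2 * m) => (bit j i ↔ side m j))).image
    (fun i => (i, j / 2 ^ ((i : ℕ) + 1))), ?_, ?_⟩
  · rw [Finset.card_image_of_injective _ hinj]
    by_cases hs : side m j
    · simp only [hs, iff_true]
      unfold side at hs
      convert hs
    · simp only [hs, iff_false]
      have h := Finset.card_filter_add_card_filter_not (s := (Finset.univ : Finset (Fin (2 * m))))
        (fun i : Fin (2 * m) => bit j i)
      rw [Finset.card_univ, Fintype.card_fin] at h
      have hs' : (Finset.univ.filter (fun i : Fin (2 * m) => bit j i)).card < m := by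
        unfold side at hs
        rw [not_le] at hs
        convert hs
      omega
  · intro v hv
    obtain ⟨i, hi, rfl⟩ := Finset.mem_image.1 hv
    exact (key m i _ j i.2).2 ⟨rfl, (Finset.mem_filter.1 hi).2⟩

end Statement3

open Statement3 in
theorem statement3 (m : ℕ) (hm : 1 ≤ m) :
    ∃ (I : Type) (a b c : I → ℝ),
      (∀ i, b i < c i) ∧
      MFoldCover m (fun i => Set.Icc (a i) (a i + 1) ×ˢ Set.Icc (b i) (c i)) Set.univ ∧
      ¬ DecomposableIntoTwoCoverings
          (fun i => Set.Icc (a i) (a i + 1) ×ˢ Set.Icc (b i) (c i)) := by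
  classical
  choose fa fb fc hbc hmem havoid using exists_avoid m
  -- Nodes of the trees, and `m` copies of an auxiliary rectangle for each non-critical point.
  let a : (Fin (2 * m) × ℕ) ⊕ ({p : ℝ × ℝ // ∀ j, p ≠ crit m j} × Fin m) → ℝ :=
    Sum.elim (fun v => na m v.1 v.2) (fun w => fa w.1.1 w.1.2)
  let b : (Fin (2 * m) × ℕ) ⊕ ({p : ℝ × ℝ // ∀ j, p ≠ crit m j} × Fin m) → ℝ :=
    Sum.elim (fun v => nb v.1 v.2) (fun w => fb w.1.1 w.1.2)
  let c : (Fin (2 * m) × ℕ) ⊕ ({p : ℝ × ℝ // ∀ j, p ≠ crit m j} × Fin m) → ℝ :=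
    Sum.elim (fun v => nc v.1 v.2) (fun w => fc w.1.1 w.1.2)
  refine ⟨_, a, b, c, ?_, ?_, ?_⟩
  · rintro (v | w)
    · have : (0 : ℝ) < 2 ^ ((v.1 : ℕ) + 2) := by positivity
      simp only [b, c, Sum.elim_inl, nb, nc]
      linarith
    · exact hbc w.1.1 w.1.2
  · intro p _
    by_cases hp : ∀ j, p ≠ crit m j
    · refine ⟨Finset.univ.image (fun k : Fin m => Sum.inr (⟨p, hp⟩, k)), ?_, ?_⟩
      · rw [Finset.card_image_of_injective, Finset.card_univ, Fintype.card_fin]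
        intro k k' h
        exact (Prod.mk.inj (Sum.inr.inj h)).2
      · intro i hi
        obtain ⟨k, -, rfl⟩ := Finset.mem_image.1 hi
        exact hmem p hp
    · push Not at hp
      obtain ⟨j, rfl⟩ := hp
      obtain ⟨t, ht, h⟩ := crit_cover m j
      refine ⟨t.image Sum.inl, ?_, ?_⟩
      · rwa [Finset.card_image_of_injective _ Sum.inl_injective]
      · intro i hi
        obtain ⟨v, hv, rfl⟩ := Finset.mem_image.1 hi
        exact h v hv
  · rintro ⟨I₁, h₁, h₂⟩
    obtain ⟨j, -, hj⟩ := exists_leaf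
      (fun i q => ∃ hi : i < 2 * m, Sum.inl (⟨i, hi⟩, q) ∈ I₁) (2 * m) 0
    -- A rectangle containing the critical point of `j` is in the first class iff `side m j`.
    have hclass : ∀ i, crit m j ∈ rect (a i) (b i) (c i) → (i ∈ I₁ ↔ side m j) := by
      rintro (⟨i, q⟩ | w) h
      · obtain ⟨hq, hs⟩ := (key m i q j i.2).1 h
        have hq' : q = j / 2 ^ ((i : ℕ) + 1) := hq
        rw [← hs, hj i i.2, ← hq']
        exact ⟨fun h => ⟨i.2, h⟩, fun h => h.2⟩
      · exact (havoid w.1.1 w.1.2 j h).elim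
    obtain ⟨i₁, hi₁, hm₁⟩ := h₁ (crit m j)
    obtain ⟨i₂, hi₂, hm₂⟩ := h₂ (crit m j)
    exact hi₂ ((hclass i₂ hm₂).2 ((hclass i₁ hm₁).1 hi₁))
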